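/- For each 132-avoiding permutation u of length n, there is exactly one alternating, 132-avoiding permutation w of length 2n+1 whose sequence of even-indexed entries (w_2, w_4, ..., w_{2n}) is order-isomorphic to u. This gives a bijection φ: S_n(132) → A_{2n+1}(132). -/

import Mathlib

/-!
Write `P i` for the position of the `i`-th peak and `V k` for that of the `k`-th valley of an
alternating permutation `w` of length `2n+1`. If `w` avoids 132 and its peaks are ordered like `u`,
then every comparison between entries of `w` is forced:

* a valley lies below every earlier peak (`valley_lt_peak`): compare it with the peak just before
  it, and use avoidance on the two peaks and the valley;
* the valleys decrease (`valley_anti`): otherwise valley `k`, peak `k` and a later larger valley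
  would form a 132;
* peak `i` lies below valley `k` exactly when `i > k` and `u i < u k`, by avoidance for valley `k`,
  peak `k`, peak `i`.

All these comparisons are summarised by one lexicographic key (`key`): peak `i` gets `(u i, n+1)`,
and valley `k` gets `(t k, n-k)`, where `t k` is the minimum of `u i` over `i ≤ k`. So `w` is
forced to be the standardization of the key (`lt_of_key_lt`), which gives uniqueness. Conversely,
the standardization of the key is alternating and avoids 132 as soon as `u` does (`key_avoids`),
which gives existence. The inverse map standardizes the subsequence of peaks.
-/

open Equiv

/-- The word `w` contains the pattern `p`: some subsequence of `w` is
order-isomorphic to `p`. -/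
def Contains {α β : Type*} [LT α] [LT β] {n k : ℕ} (w : Fin n → α) (p : Fin k → β) : Prop :=
  ∃ f : Fin k → Fin n, StrictMono f ∧ ∀ i j : Fin k, p i < p j ↔ w (f i) < w (f j)

/-- The pattern 132 (written with 0-indexed values as (0,2,1)). -/
def pat132 : Fin 3 → ℕ := ![0, 2, 1]

/-- `w` avoids the pattern 132. -/
def Avoids132 {n : ℕ} (w : Equiv.Perm (Fin n)) : Prop :=
  ¬ Contains (fun i => w i) pat132

/-- Pattern containment between permutations. -/
def ContainsP {n k : ℕ} (w : Equiv.Perm (Fin n)) (p : Equiv.Perm (Fin k)) : Prop :=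
  Contains (fun i => w i) (fun i => p i)

/-- `w` is (up-down) alternating: `w 0 < w 1 > w 2 < w 3 > ⋯` (0-indexed). -/
def Alternating {m : ℕ} (w : Equiv.Perm (Fin m)) : Prop :=
  ∀ i : ℕ, ∀ h : i + 1 < m,
    (i % 2 = 0 → w ⟨i, by omega⟩ < w ⟨i + 1, h⟩) ∧
    (i % 2 = 1 → w ⟨i + 1, h⟩ < w ⟨i, by omega⟩)

/-- The even-indexed (in 1-indexed terms: `w₂, w₄, …, w₂ₙ`) entries of `w`
are order-isomorphic to `u`. -/
def OrderIsoEven {n : ℕ} (w : Equiv.Perm (Fin (2 * n + 1))) (u : Equiv.Perm (Fin n)) : Prop :=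
  ∀ i j : Fin n, u i < u j ↔
    w ⟨2 * (i : ℕ) + 1, by have := i.isLt; omega⟩ < w ⟨2 * (j : ℕ) + 1, by have := j.isLt; omega⟩

/-! ### Avoidance and standardization -/

/-- Avoidance of 132, spelled out for three positions. -/
lemma avoids132_iff {n : ℕ} (w : Equiv.Perm (Fin n)) :
    Avoids132 w ↔ ∀ a b c : Fin n, a < b → b < c → w a < w c → ¬ w c < w b := by
  unfold Avoids132 Contains
  constructor
  · intro h a b c hab hbc hac hcb
    refine h ⟨![a, b, c], ?_, ?_⟩
    · intro i j hij
      fin_cases i <;> fin_cases j <;> simp at hij ⊢ <;> order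
    · intro i j
      fin_cases i <;> fin_cases j <;> simp [pat132] <;> order
  · rintro h ⟨f, hf, hp⟩
    refine h (f 0) (f 1) (f 2) (hf (by decide)) (hf (by decide)) ?_ ?_
    · exact (hp 0 2).1 (by decide)
    · exact (hp 2 1).1 (by decide)

/-- Every injective word has a standardization, namely the inverse of its sorting permutation. -/
lemma exists_standardization {m : ℕ} {α : Type*} [LinearOrder α] (f : Fin m → α)
    (hf : Function.Injective f) :
    ∃ w : Equiv.Perm (Fin m), ∀ i j, w i < w j ↔ f i < f j := by
  have hs : StrictMono (f ∘ Tuple.sort f) :=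
    (Tuple.monotone_sort f).strictMono_of_injective (hf.comp (Tuple.sort f).injective)
  refine ⟨(Tuple.sort f).symm, fun i j => ?_⟩
  rw [← hs.lt_iff_lt]
  simp

/-- A permutation is determined by the order of its entries. -/
lemma perm_eq_of_lt_imp {m : ℕ} (w w' : Equiv.Perm (Fin m))
    (h : ∀ i j, w i < w j → w' i < w' j) : w = w' := by
  have hs : StrictMono (w.symm.trans w') := fun i j hij =>
    h _ _ (by simpa using hij)
  have h1 := Subsingleton.elim
    (hs.orderIsoOfSurjective _ (w.symm.trans w').surjective) (OrderIso.refl _)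
  ext i
  have h2 := DFunLike.congr_fun h1 (w i)
  simp at h2
  rw [h2]

/-! ### Peaks and valleys -/

/-- The position of the `i`-th peak. -/
def P {n : ℕ} (i : Fin n) : Fin (2 * n + 1) := ⟨2 * (i : ℕ) + 1, by have := i.isLt; omega⟩

/-- The position of the `k`-th valley; there is one more valley than there are peaks. -/
def V {n : ℕ} (k : Fin (n + 1)) : Fin (2 * n + 1) := ⟨2 * (k : ℕ), by have := k.isLt; omega⟩

lemma P_lt_P {n : ℕ} {i j : Fin n} : P i < P j ↔ i < j := by
  simp only [P, Fin.lt_def]; omega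

lemma V_lt_V {n : ℕ} {i j : Fin (n + 1)} : V i < V j ↔ i < j := by
  simp only [V, Fin.lt_def]; omega

lemma P_lt_V {n : ℕ} {i : Fin n} {k : Fin (n + 1)} : P i < V k ↔ i.val < k.val := by
  simp only [P, V, Fin.lt_def]; omega

lemma V_lt_P {n : ℕ} {i : Fin n} {k : Fin (n + 1)} : V k < P i ↔ k.val ≤ i.val := by
  simp only [P, V, Fin.lt_def]; omega

lemma peak_or_valley {n : ℕ} (p : Fin (2 * n + 1)) : (∃ i, p = P i) ∨ ∃ k, p = V k := by
  have hp := p.isLt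
  rcases Nat.mod_two_eq_zero_or_one p.val with h | h
  · exact Or.inr ⟨⟨p.val / 2, by omega⟩, Fin.ext (by simp only [V]; omega)⟩
  · exact Or.inl ⟨⟨p.val / 2, by omega⟩, Fin.ext (by simp only [P]; omega)⟩

lemma orderIsoEven_iff {n : ℕ} (w : Equiv.Perm (Fin (2 * n + 1))) (u : Equiv.Perm (Fin n)) :
    OrderIsoEven w u ↔ ∀ i j, u i < u j ↔ w (P i) < w (P j) := Iff.rfl

lemma alternating_iff {n : ℕ} (w : Equiv.Perm (Fin (2 * n + 1))) :
    Alternating w ↔ ∀ i : Fin n, w (V i.castSucc) < w (P i) ∧ w (V i.succ) < w (P i) := by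
  constructor
  · intro h i
    have hi := i.isLt
    exact ⟨(h (2 * i.val) (by omega)).1 (by omega), (h (2 * i.val + 1) (by omega)).2 (by omega)⟩
  · intro h i hi
    constructor
    · intro h0
      obtain ⟨k, rfl⟩ : ∃ k, i = 2 * k := ⟨i / 2, by omega⟩
      exact (h ⟨k, by omega⟩).1
    · intro h1
      obtain ⟨k, rfl⟩ : ∃ k, i = 2 * k + 1 := ⟨i / 2, by omega⟩
      exact (h ⟨k, by omega⟩).2

/-! ### Forced comparisons -/

section Forced

variable {n : ℕ} {w : Equiv.Perm (Fin (2 * n + 1))}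

/-- A valley lies below its own peak (the next one) and below all earlier peaks. -/
lemma valley_lt_peak (hw : Alternating w) (ha : Avoids132 w) (k : Fin (n + 1)) (i : Fin n)
    (hik : i.val ≤ k.val) : w (V k) < w (P i) := by
  rw [alternating_iff] at hw
  rw [avoids132_iff] at ha
  rcases hik.eq_or_lt with h | h
  · obtain rfl : k = i.castSucc := Fin.ext h.symm
    exact (hw i).1
  · -- `j` is the peak immediately before valley `k`.
    obtain ⟨j, rfl⟩ : ∃ j : Fin n, k = j.succ :=
      ⟨⟨k.val - 1, by omega⟩, Fin.ext (by simp; omega)⟩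
    have hj := (hw j).2
    by_contra! hc
    have hne : w (P i) ≠ w (V j.succ) := fun he => by
      have := congrArg Fin.val (w.injective he)
      simp only [P, V] at this
      omega
    have hij : i ≠ j := by
      rintro rfl
      exact absurd hj (not_lt.2 hc)
    have hlt : i < j := lt_of_le_of_ne (Nat.le_of_lt_succ h) hij
    exact ha (P i) (P j) (V j.succ) (P_lt_P.2 hlt) (P_lt_V.2 (by simp))
      (lt_of_le_of_ne hc hne) hj

/-- The valleys decrease from left to right. -/
lemma valley_anti (hw : Alternating w) (ha : Avoids132 w) {k l : Fin (n + 1)} (h : k < l) :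
    w (V l) < w (V k) := by
  have hk : k.val < n := by have := l.isLt; have : k.val < l.val := h; omega
  have h1 := valley_lt_peak hw ha l ⟨k, hk⟩ (le_of_lt h)
  rw [avoids132_iff] at ha
  by_contra! hc
  have hne : w (V k) ≠ w (V l) := fun he => (V_lt_V.2 h).ne (w.injective he)
  exact ha (V k) (P ⟨k, hk⟩) (V l) (V_lt_P.2 le_rfl) (P_lt_V.2 h) (lt_of_le_of_ne hc hne) h1

end Forced

/-! ### The key of a permutation -/

/-- The minimum of `u i` over `i ≤ k`. For `n = 0` the set is empty, and the value is the
junk value `0`, which is harmless since there is then a single entry. -/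
noncomputable def prefixMin {n : ℕ} (u : Equiv.Perm (Fin n)) (k : ℕ) : ℕ :=
  sInf {x | ∃ i : Fin n, i.val ≤ k ∧ (u i).val = x}

lemma prefixMin_le {n : ℕ} (u : Equiv.Perm (Fin n)) {k : ℕ} {i : Fin n} (h : i.val ≤ k) :
    prefixMin u k ≤ u i :=
  Nat.sInf_le ⟨i, h, rfl⟩

lemma exists_prefixMin {n : ℕ} (u : Equiv.Perm (Fin n)) (hn : 0 < n) (k : ℕ) :
    ∃ i : Fin n, i.val ≤ k ∧ (u i).val = prefixMin u k :=
  Nat.sInf_mem (s := {x | ∃ i : Fin n, i.val ≤ k ∧ (u i).val = x})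
    ⟨_, ⟨0, hn⟩, Nat.zero_le _, rfl⟩

lemma prefixMin_anti {n : ℕ} (u : Equiv.Perm (Fin n)) (hn : 0 < n) {k l : ℕ} (h : k ≤ l) :
    prefixMin u l ≤ prefixMin u k := by
  obtain ⟨i, hi, he⟩ := exists_prefixMin u hn k
  exact he ▸ prefixMin_le u (hi.trans h)

/-- The lexicographic key whose standardization is `φ(u)`: peak `i` has key `(u i, n+1)`, valley
`k` has key `(t k, n-k)` with `t` the prefix minimum, so that a valley lies just below the peak
realizing its prefix minimum, and valleys sharing that minimum decrease. -/
noncomputable def key {n : ℕ} (u : Equiv.Perm (Fin n)) (p : Fin (2 * n + 1)) : ℕ ×ₗ ℕ :=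
  if h : p.val % 2 = 1 then toLex ((u ⟨p.val / 2, by have := p.isLt; omega⟩).val, n + 1)
  else toLex (prefixMin u (p.val / 2), n - p.val / 2)

lemma key_P {n : ℕ} (u : Equiv.Perm (Fin n)) (i : Fin n) :
    key u (P i) = toLex ((u i).val, n + 1) := by
  have h : (P i).val % 2 = 1 := by simp only [P]; omega
  have h2 : (⟨(P i).val / 2, by have := (P i).isLt; omega⟩ : Fin n) = i :=
    Fin.ext (by simp only [P]; omega)
  rw [key, dif_pos h, h2]

lemma key_V {n : ℕ} (u : Equiv.Perm (Fin n)) (k : Fin (n + 1)) :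
    key u (V k) = toLex (prefixMin u k, n - k) := by
  have h : ¬ (V k).val % 2 = 1 := by simp only [V]; omega
  have h2 : (V k).val / 2 = k := by simp only [V]; omega
  rw [key, dif_neg h, h2]

section Key

variable {n : ℕ} (u : Equiv.Perm (Fin n))

lemma key_P_lt_P {i j : Fin n} : key u (P i) < key u (P j) ↔ u i < u j := by
  simp [key_P, Prod.Lex.toLex_lt_toLex]

lemma key_P_lt_V {i : Fin n} {k : Fin (n + 1)} :
    key u (P i) < key u (V k) ↔ (u i).val < prefixMin u k := by
  simp only [key_P, key_V, Prod.Lex.toLex_lt_toLex]; omega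

lemma key_V_lt_P {i : Fin n} {k : Fin (n + 1)} :
    key u (V k) < key u (P i) ↔ prefixMin u k ≤ u i := by
  simp only [key_P, key_V, Prod.Lex.toLex_lt_toLex]; omega

lemma key_V_lt_V {k l : Fin (n + 1)} : key u (V k) < key u (V l) ↔ l < k := by
  have hk := k.isLt
  have hl := l.isLt
  rcases Nat.eq_zero_or_pos n with h0 | hn
  · subst h0
    obtain rfl : k = l := Fin.ext (by omega)
    simp
  · have h1 := prefixMin_anti u hn (k := k) (l := l)
    have h2 := prefixMin_anti u hn (k := l) (l := k)
    simp only [key_V, Prod.Lex.toLex_lt_toLex, Fin.lt_def]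
    omega

lemma key_injective : Function.Injective (key u) := by
  intro p q h
  rcases peak_or_valley p with ⟨i, rfl⟩ | ⟨k, rfl⟩ <;>
    rcases peak_or_valley q with ⟨j, rfl⟩ | ⟨l, rfl⟩
  · simp only [key_P, EmbeddingLike.apply_eq_iff_eq, Prod.mk.injEq] at h
    rw [u.injective (Fin.ext h.1)]
  · simp only [key_P, key_V, EmbeddingLike.apply_eq_iff_eq, Prod.mk.injEq] at h
    omega
  · simp only [key_P, key_V, EmbeddingLike.apply_eq_iff_eq, Prod.mk.injEq] at h
    omega
  · simp only [key_V, EmbeddingLike.apply_eq_iff_eq, Prod.mk.injEq] at h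
    have := k.isLt
    have := l.isLt
    rw [Fin.ext (show k.val = l.val by omega)]

/-- The key of a 132-avoiding permutation is itself 132-avoiding. A 132 cannot end in a valley,
since a valley lies below everything before it, nor have a valley in the middle, for the same
reason. If it starts with a valley, the peak realizing the prefix minimum of this valley can take
its place, so that `u` would contain a 132. -/
lemma key_avoids (hu : Avoids132 u) (a b c : Fin (2 * n + 1)) (hab : a < b) (hbc : b < c)
    (hac : key u a < key u c) : ¬ key u c < key u b := by
  rw [avoids132_iff] at hu
  intro hcb
  -- A valley has a smaller key than every earlier entry.
  have valley_min : ∀ (p : Fin (2 * n + 1)) (k : Fin (n + 1)), p < V k →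
      key u (V k) < key u p := by
    intro p k hp
    rcases peak_or_valley p with ⟨i, rfl⟩ | ⟨l, rfl⟩
    · exact (key_V_lt_P u).2 (prefixMin_le u (P_lt_V.1 hp).le)
    · exact (key_V_lt_V u).2 (V_lt_V.1 hp)
  rcases peak_or_valley c with ⟨j, rfl⟩ | ⟨k, rfl⟩
  swap
  · exact lt_asymm hac (valley_min _ _ (hab.trans hbc))
  rcases peak_or_valley b with ⟨i, rfl⟩ | ⟨k, rfl⟩
  swap
  · exact lt_asymm (hac.trans hcb) (valley_min _ _ hab)
  rw [P_lt_P] at hbc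
  rw [key_P_lt_P] at hcb
  rcases peak_or_valley a with ⟨l, rfl⟩ | ⟨k, rfl⟩
  · exact hu l i j (P_lt_P.1 hab) hbc ((key_P_lt_P u).1 hac) hcb
  · rw [V_lt_P] at hab
    rw [key_V_lt_P] at hac
    obtain ⟨l, hl, he⟩ := exists_prefixMin u i.pos k
    have hlj : u l ≤ u j := by rw [Fin.le_def, he]; exact hac
    have hli : l < i := lt_of_le_of_ne (hl.trans hab) (by rintro rfl; exact absurd hcb hlj.not_gt)
    exact hu l i j hli hbc
      (lt_of_le_of_ne hlj (fun h => (hli.trans hbc).ne (u.injective h))) hcb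

/-- The order of the entries of an alternating 132-avoiding permutation with peaks ordered like `u`
is that of the key of `u`. -/
lemma lt_of_key_lt {w : Equiv.Perm (Fin (2 * n + 1))} (hw : Alternating w) (ha : Avoids132 w)
    (ho : OrderIsoEven w u) {p q : Fin (2 * n + 1)} (h : key u p < key u q) : w p < w q := by
  rw [orderIsoEven_iff] at ho
  rcases peak_or_valley p with ⟨i, rfl⟩ | ⟨k, rfl⟩ <;>
    rcases peak_or_valley q with ⟨j, rfl⟩ | ⟨l, rfl⟩
  · exact (ho i j).1 ((key_P_lt_P u).1 h)
  · rw [key_P_lt_V] at h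
    have hli : l.val < i.val := by
      by_contra! hc
      exact absurd (prefixMin_le u hc) (by omega)
    have hl : l.val < n := hli.trans i.isLt
    have h1 : w (P i) < w (P ⟨l, hl⟩) :=
      (ho _ _).1 (Fin.lt_def.2 (h.trans_le (prefixMin_le u le_rfl)))
    have hne : w (V l) ≠ w (P i) := fun he => (V_lt_P.2 hli.le).ne (w.injective he)
    by_contra! hc
    exact (avoids132_iff w).1 ha (V l) (P ⟨l, hl⟩) (P i) (V_lt_P.2 le_rfl) (P_lt_P.2 hli)
      (lt_of_le_of_ne hc hne) h1
  · rw [key_V_lt_P] at h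
    obtain ⟨i, hi, he⟩ := exists_prefixMin u j.pos k
    have hij : ¬ u j < u i := by rw [Fin.lt_def]; omega
    rw [ho, not_lt] at hij
    exact (valley_lt_peak hw ha k i hi).trans_le hij
  · exact valley_anti hw ha ((key_V_lt_V u).1 h)

end Key

/-! ### The bijection -/

/-- every 132-avoiding permutation `u` of length `n` is the
order-isomorphism type of the even-indexed entries of exactly one alternating
132-avoiding permutation of length `2n+1`, and conversely; this correspondence
is the bijection `φ : S_n(132) → A_{2n+1}(132)`. -/
theorem stmt9 (n : ℕ) :
    (∀ u : Equiv.Perm (Fin n), Avoids132 u →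
      ∃! w : Equiv.Perm (Fin (2 * n + 1)),
        Alternating w ∧ Avoids132 w ∧ OrderIsoEven w u) ∧
    (∀ w : Equiv.Perm (Fin (2 * n + 1)), Alternating w → Avoids132 w →
      ∃! u : Equiv.Perm (Fin n), Avoids132 u ∧ OrderIsoEven w u) := by
  refine ⟨fun u hu => ?_, fun w hw ha => ?_⟩
  · obtain ⟨w, hw⟩ := exists_standardization (key u) (key_injective u)
    refine ⟨w, ⟨?_, ?_, ?_⟩, ?_⟩
    · rw [alternating_iff]
      intro i
      rw [hw, hw, key_V_lt_P, key_V_lt_P]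
      exact ⟨prefixMin_le u (by simp), prefixMin_le u (by simp)⟩
    · rw [avoids132_iff]
      intro a b c hab hbc
      rw [hw, hw]
      exact key_avoids u hu a b c hab hbc
    · rw [orderIsoEven_iff]
      intro i j
      rw [hw, key_P_lt_P]
    · rintro w' ⟨h1, h2, h3⟩
      exact (perm_eq_of_lt_imp w w' fun i j h => lt_of_key_lt u h1 h2 h3 ((hw i j).1 h)).symm
  · have hinj : Function.Injective fun i : Fin n => w (P i) := fun i j h => by
      have := congrArg Fin.val (w.injective h)
      simp only [P] at this
      exact Fin.ext (by omega)
    obtain ⟨u, hu⟩ := exists_standardization _ hinj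
    refine ⟨u, ⟨?_, (orderIsoEven_iff w u).2 hu⟩, ?_⟩
    · rw [avoids132_iff] at ha ⊢
      intro a b c hab hbc
      rw [hu, hu]
      exact ha _ _ _ (P_lt_P.2 hab) (P_lt_P.2 hbc)
    · rintro u' ⟨-, h⟩
      exact perm_eq_of_lt_imp u' u fun i j hij => (hu i j).2 ((h i j).1 hij)
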